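/- Let G be a cactus with n vertices, k cycles, and m edges, whose cycles C_1, …, C_k have lengths m_1, …, m_k with m_1, …, m_t odd and m_{t+1}, …, m_k even. Then Sz*_e(G) ≥ (2m² − m)/4 + ((m−1)²·Σ_{i=1}^k m_i)/4 − (Σ_{i=1}^t (m_i − 1)(m − m_i)²)/4 − (Σ_{i=t+1}^k m_i(m − m_i)²)/4, with equality if and only if G is the bundle G(m_1, …, m_k), i.e., all cycles share one common vertex and all cut edges are pendant edges attached at that vertex. -/

import Mathlib

open scoped Classical
open Finset

noncomputable def eDist {V : Type*} (G : SimpleGraph V) (f : Sym2 V) (w : V) : ℕ :=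
  Sym2.lift ⟨fun a b => min (G.dist a w) (G.dist b w), fun _ _ => min_comm _ _⟩ f

noncomputable def mCloser {V : Type*} (G : SimpleGraph V) [Fintype V] (u v : V) : ℕ :=
  (G.edgeFinset.filter fun f => eDist G f u < eDist G f v).card

noncomputable def mEqui {V : Type*} (G : SimpleGraph V) [Fintype V] (u v : V) : ℕ :=
  (G.edgeFinset.filter fun f => eDist G f u = eDist G f v).card

/-- The edge revised Szeged index (each edge `uv` is counted once; the double sum over
ordered adjacent pairs counts it twice, whence the division by 2). -/
noncomputable def szRevE {V : Type*} (G : SimpleGraph V) [Fintype V] : ℚ :=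
  (∑ u : V, ∑ v : V, if G.Adj u v then
      ((mCloser G u v : ℚ) + (mEqui G u v : ℚ) / 2) *
        ((mCloser G v u : ℚ) + (mEqui G u v : ℚ) / 2)
    else 0) / 2

/-- The edges of `G` lying in the connected component `c`. -/
noncomputable def compEdges {V : Type*} (G : SimpleGraph V) [Fintype V]
    (c : G.ConnectedComponent) : Finset (Sym2 V) :=
  G.edgeFinset.filter fun f => ∀ x ∈ f, G.connectedComponentMk x = c

/-- A cactus: a connected graph in which any two (edge-)distinct cycles share
at most one vertex. -/
def IsCactus {V : Type*} (G : SimpleGraph V) : Prop :=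
  G.Connected ∧ ∀ ⦃a b : V⦄ (p : G.Walk a a) (q : G.Walk b b),
    p.IsCycle → q.IsCycle → p.edges.toFinset ≠ q.edges.toFinset →
    (p.support.toFinset ∩ q.support.toFinset).card ≤ 1

/-- The bundle `G(len 0, …, len (k-1))`: `k` cycles of the given lengths all sharing a single
common hub vertex, together with `p` pendant edges attached at the hub. -/
def bundleGraph (k : ℕ) (len : Fin k → ℕ) (p : ℕ) :
    SimpleGraph (Unit ⊕ ((Σ i : Fin k, Fin (len i - 1)) ⊕ Fin p)) :=
  SimpleGraph.fromRel fun x y =>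
    match x, y with
    | Sum.inl _, Sum.inr (Sum.inr _) => True
    | Sum.inl _, Sum.inr (Sum.inl ⟨i, a⟩) => a.val = 0 ∨ a.val = len i - 2
    | Sum.inr (Sum.inl ⟨i, a⟩), Sum.inr (Sum.inl ⟨j, b⟩) => i = j ∧ a.val + 1 = b.val
    | _, _ => False

/-!
With `m` edges in total, the term of an edge `e` in the index equals `(m ^ 2 - S ^ 2) / 4`, where
`S` is the number of edges closer to one end of `e` minus the number closer to the other. So the
sum of the `S ^ 2` has to be maximised.

Off the cycles `|S| ≤ m - 1`, with equality exactly for pendant edges. On a cycle of length `L`,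
the edges of the cycle cancel in `S`, and an edge `f` off the cycle acts through its gate, the
vertex at which the cycle is entered from `f`: at position `z` it contributes `δ (z - gate f)`,
where `δ` is the difference of consecutive distances around the cycle. Hence the sum of `S ^ 2`
along the cycle is a sum of `(m - L) ^ 2` autocorrelations of `δ`, each at most `2 * ⌊L / 2⌋` with
equality exactly if the two gates coincide.

In the case of equality each cycle is thus attached to the rest of the graph at a single hub, and
all other edges are pendant. Any two edges with a common end have the same hub, so by connectedness
there is only one hub.
-/

namespace EdgeSzeged

section Imbalance

variable {V : Type*} {G : SimpleGraph V}

theorem eDist_mk (a b w : V) : eDist G s(a, b) w = min (G.dist a w) (G.dist b w) := rfl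

theorem eDist_le_eDist_add_one (hG : G.Connected) {u v : V} (h : G.Adj u v) (f : Sym2 V) :
    eDist G f u ≤ eDist G f v + 1 := by
  induction f with | _ a b
  have hvu : G.dist v u = 1 := SimpleGraph.dist_eq_one_iff_adj.2 h.symm
  have ha := hG.dist_triangle (u := a) (v := v) (w := u)
  have hb := hG.dist_triangle (u := b) (v := v) (w := u)
  simp only [eDist_mk]
  omega

theorem eDist_sub_eDist_le_one (hG : G.Connected) {u v : V} (h : G.Adj u v) (f : Sym2 V) :
    (eDist G f u : ℚ) - eDist G f v ≤ 1 := by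
  rw [sub_le_iff_le_add']
  exact_mod_cast eDist_le_eDist_add_one hG h f

theorem dist_eq_add_one_of_leaf (hG : G.Connected) {u v x : V} (hu : ∀ y, G.Adj u y → y = v)
    (hx : x ≠ u) : G.dist x u = G.dist x v + 1 := by
  obtain ⟨p, hp⟩ := hG.exists_walk_length_eq_dist u x
  cases p with
  | nil => exact absurd rfl hx
  | @cons _ y _ huy q =>
    obtain rfl : y = v := hu y huy
    have hyx : G.dist x y ≤ q.length := SimpleGraph.dist_comm.trans_le (SimpleGraph.dist_le q)
    have huv : G.dist y u = 1 := SimpleGraph.dist_eq_one_iff_adj.2 huy.symm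
    have htri := hG.dist_triangle (u := x) (v := y) (w := u)
    rw [SimpleGraph.Walk.length_cons, SimpleGraph.dist_comm] at hp
    omega

theorem eDist_eq_add_one_of_leaf (hG : G.Connected) {u v : V} (hu : ∀ y, G.Adj u y → y = v)
    {f : Sym2 V} (hf : u ∉ f) : eDist G f u = eDist G f v + 1 := by
  induction f with | _ a b
  rw [Sym2.mem_iff, not_or] at hf
  rw [eDist_mk, eDist_mk, dist_eq_add_one_of_leaf hG hu (Ne.symm hf.1),
    dist_eq_add_one_of_leaf hG hu (Ne.symm hf.2), min_add_add_right]

variable [Fintype V]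

variable (G) in
/-- The imbalance of an edge `uv`: the signed difference of the total edge-to-vertex distances
at `u` and `v`. As these differ by at most one, it counts the edges closer to `v` minus those
closer to `u`. -/
noncomputable def imbalance (u v : V) : ℚ :=
  ∑ f ∈ G.edgeFinset, ((eDist G f u : ℚ) - eDist G f v)

theorem imbalance_swap (u v : V) : imbalance G v u = -imbalance G u v := by
  simp only [imbalance, ← sum_neg_distrib, neg_sub]

variable (G) in
/-- The squared imbalance of an edge, which no longer depends on its orientation. -/
noncomputable def sqImbalance (e : Sym2 V) : ℚ :=
  Sym2.lift ⟨fun u v => imbalance G u v ^ 2, fun u v => by simp only [imbalance_swap u v, neg_sq]⟩ e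

theorem sqImbalance_mk (u v : V) : sqImbalance G s(u, v) = imbalance G u v ^ 2 := rfl

theorem mEqui_comm (u v : V) : mEqui G u v = mEqui G v u := by
  simp only [mEqui, eq_comm]

theorem mCloser_add_half_mEqui (hG : G.Connected) {u v : V} (h : G.Adj u v) :
    (mCloser G u v : ℚ) + (mEqui G u v : ℚ) / 2 = (#G.edgeFinset - imbalance G u v) / 2 := by
  rw [mCloser, mEqui, card_filter, card_filter, card_eq_sum_ones, imbalance]
  simp only [Nat.cast_sum, ← sum_add_distrib, ← sum_sub_distrib, sum_div]
  refine sum_congr rfl fun f _ => ?_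
  have huv := eDist_le_eDist_add_one hG h f
  have hvu := eDist_le_eDist_add_one hG h.symm f
  obtain hlt | heq | hgt := lt_trichotomy (eDist G f u) (eDist G f v)
  · obtain hf : eDist G f v = eDist G f u + 1 := by omega
    simp [hf]
  · simp [heq]
  · obtain hf : eDist G f u = eDist G f v + 1 := by omega
    simp [hf]

theorem szeged_term_eq (hG : G.Connected) {u v : V} (h : G.Adj u v) :
    ((mCloser G u v : ℚ) + (mEqui G u v : ℚ) / 2) * ((mCloser G v u : ℚ) + (mEqui G u v : ℚ) / 2) =
      ((#G.edgeFinset : ℚ) ^ 2 - sqImbalance G s(u, v)) / 4 := by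
  rw [mCloser_add_half_mEqui hG h, mEqui_comm, mCloser_add_half_mEqui hG h.symm,
    imbalance_swap u v, sqImbalance_mk]
  ring

theorem sum_adj_eq_two_mul_sum_edgeFinset (G : SimpleGraph V) (F : Sym2 V → ℚ) :
    (∑ u, ∑ v, if G.Adj u v then F s(u, v) else 0) = 2 * ∑ e ∈ G.edgeFinset, F e := by
  calc (∑ u, ∑ v, if G.Adj u v then F s(u, v) else 0)
      = ∑ d : G.Dart, F d.edge := by
        rw [← Fintype.sum_prod_type', ← sum_filter]
        refine (sum_bij (fun (d : G.Dart) _ => d.toProd) ?_ ?_ ?_ ?_).symm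
        · exact fun d _ => mem_filter.2 ⟨mem_univ _, d.adj⟩
        · exact fun d _ d' _ h => SimpleGraph.Dart.toProd_injective h
        · exact fun p hp => ⟨⟨p, (mem_filter.1 hp).2⟩, mem_univ _, rfl⟩
        · exact fun d _ => rfl
    _ = ∑ e ∈ G.edgeFinset, ∑ d : G.Dart with d.edge = e, F d.edge :=
        (sum_fiberwise_of_maps_to (fun d _ => SimpleGraph.mem_edgeFinset.2 d.edge_mem) _).symm
    _ = ∑ e ∈ G.edgeFinset, 2 * F e := by
        refine sum_congr rfl fun e he => ?_
        rw [sum_congr rfl fun d hd => congrArg F (mem_filter.1 hd).2, sum_const,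
          G.dart_edge_fiber_card e (SimpleGraph.mem_edgeFinset.1 he), nsmul_eq_mul, Nat.cast_two]
    _ = 2 * ∑ e ∈ G.edgeFinset, F e := (mul_sum _ _ _).symm

theorem szRevE_eq_sum_edgeFinset (hG : G.Connected) :
    szRevE G = ∑ e ∈ G.edgeFinset, ((#G.edgeFinset : ℚ) ^ 2 - sqImbalance G e) / 4 := by
  have hsum := sum_adj_eq_two_mul_sum_edgeFinset G
    fun e => ((#G.edgeFinset : ℚ) ^ 2 - sqImbalance G e) / 4
  rw [szRevE, div_eq_iff two_ne_zero, mul_comm, ← hsum]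
  refine sum_congr rfl fun u _ => sum_congr rfl fun v _ => if_ctx_congr Iff.rfl (fun h => ?_) ?_
  · exact szeged_term_eq hG h
  · exact fun _ => rfl

end Imbalance

section Pendant

variable {V : Type*} {G : SimpleGraph V}

variable (G) in
/-- An edge is pendant if one of its ends has no other neighbour. -/
def IsPendant (e : Sym2 V) : Prop :=
  ∃ u v, e = s(u, v) ∧ ∀ y, G.Adj u y → y = v

theorem isPendant_mk_iff {u v : V} :
    IsPendant G s(u, v) ↔ (∀ y, G.Adj u y → y = v) ∨ ∀ y, G.Adj v y → y = u := by
  constructor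
  · rintro ⟨a, b, hab, ha⟩
    obtain ⟨rfl, rfl⟩ | ⟨rfl, rfl⟩ := Sym2.eq_iff.1 hab
    exacts [Or.inl ha, Or.inr ha]
  · rintro (h | h)
    exacts [⟨u, v, rfl, h⟩, ⟨v, u, Sym2.eq_swap, h⟩]

variable [Fintype V]

theorem imbalance_eq_sum_erase (u v : V) :
    imbalance G u v = ∑ f ∈ G.edgeFinset.erase s(u, v), ((eDist G f u : ℚ) - eDist G f v) := by
  refine (sum_erase _ ?_).symm
  simp [eDist_mk]

theorem card_edgeFinset_sub_one {u v : V} (h : G.Adj u v) :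
    (#G.edgeFinset : ℚ) - 1 = ∑ f ∈ G.edgeFinset.erase s(u, v), 1 := by
  have huv : s(u, v) ∈ G.edgeFinset := SimpleGraph.mem_edgeFinset.2 h
  rw [sum_const, nsmul_one, card_erase_of_mem huv, Nat.cast_pred (card_pos.2 ⟨_, huv⟩)]

theorem imbalance_le (hG : G.Connected) {u v : V} (h : G.Adj u v) :
    imbalance G u v ≤ #G.edgeFinset - 1 := by
  rw [imbalance_eq_sum_erase, card_edgeFinset_sub_one h]
  exact sum_le_sum fun f _ => eDist_sub_eDist_le_one hG h f

theorem imbalance_eq_iff (hG : G.Connected) {u v : V} (h : G.Adj u v) :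
    imbalance G u v = #G.edgeFinset - 1 ↔ ∀ y, G.Adj u y → y = v := by
  rw [imbalance_eq_sum_erase, card_edgeFinset_sub_one h,
    sum_eq_sum_iff_of_le fun f _ => eDist_sub_eDist_le_one hG h f]
  constructor
  · intro hall y hy
    by_contra hyv
    have huy : s(u, y) ∈ G.edgeFinset.erase s(u, v) :=
      mem_erase.2 ⟨by simpa [hyv] using fun _ => hy.ne', SimpleGraph.mem_edgeFinset.2 hy⟩
    have hnonpos : (eDist G s(u, y) u : ℚ) - eDist G s(u, y) v ≤ 0 := by simp [eDist_mk]
    linarith [hall _ huy]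
  · intro hleaf f hf
    obtain ⟨hne, hfG⟩ := mem_erase.1 hf
    have huf : u ∉ f := by
      rintro ⟨y, rfl⟩
      exact hne (by rw [hleaf y (SimpleGraph.mem_edgeFinset.1 hfG)])
    rw [eDist_eq_add_one_of_leaf hG hleaf huf]
    push_cast
    ring

theorem sqImbalance_le (hG : G.Connected) {e : Sym2 V} (he : e ∈ G.edgeFinset) :
    sqImbalance G e ≤ ((#G.edgeFinset : ℚ) - 1) ^ 2 := by
  induction e with | _ u v
  have h : G.Adj u v := SimpleGraph.mem_edgeFinset.1 he
  have hvu : -imbalance G u v ≤ #G.edgeFinset - 1 :=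
    (imbalance_swap u v).symm.trans_le (imbalance_le hG h.symm)
  exact sq_le_sq' (neg_le.1 hvu) (imbalance_le hG h)

theorem sqImbalance_eq_iff (hG : G.Connected) {e : Sym2 V} (he : e ∈ G.edgeFinset) :
    sqImbalance G e = ((#G.edgeFinset : ℚ) - 1) ^ 2 ↔ IsPendant G e := by
  induction e with | _ u v
  have h : G.Adj u v := SimpleGraph.mem_edgeFinset.1 he
  rw [sqImbalance_mk, sq_eq_sq_iff_eq_or_eq_neg, imbalance_eq_iff hG h, ← neg_eq_iff_eq_neg,
    ← imbalance_swap u v, imbalance_eq_iff hG h.symm, isPendant_mk_iff]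

end Pendant

section CyclicNorm

variable {L : ℕ}

/-- The distance from `0` to `z` along a cycle with vertex set `ZMod L`. -/
def cyclicNorm (z : ZMod L) : ℕ := z.valMinAbs.natAbs

theorem cyclicNorm_zero : cyclicNorm (0 : ZMod L) = 0 := by simp [cyclicNorm]

theorem cyclicNorm_eq_zero {z : ZMod L} : cyclicNorm z = 0 ↔ z = 0 := by
  rw [cyclicNorm, Int.natAbs_eq_zero, ZMod.valMinAbs_eq_zero]

theorem cyclicNorm_neg (z : ZMod L) : cyclicNorm (-z) = cyclicNorm z :=
  ZMod.natAbs_valMinAbs_neg z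

theorem cyclicNorm_sub_comm (a b : ZMod L) : cyclicNorm (a - b) = cyclicNorm (b - a) := by
  rw [← cyclicNorm_neg, neg_sub]

theorem cyclicNorm_add_le (a b : ZMod L) : cyclicNorm (a + b) ≤ cyclicNorm a + cyclicNorm b :=
  ZMod.natAbs_valMinAbs_add_le a b |>.trans (Int.natAbs_add_le _ _)

variable [NeZero L]

theorem cyclicNorm_eq_min (z : ZMod L) : cyclicNorm z = min z.val (L - z.val) :=
  ZMod.valMinAbs_natAbs_eq_min z

theorem cyclicNorm_one_le : cyclicNorm (1 : ZMod L) ≤ 1 := by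
  rw [cyclicNorm_eq_min, ZMod.val_one_eq_one_mod]
  exact (min_le_left _ _).trans (Nat.mod_le 1 L)

theorem val_add_one (z : ZMod L) : (z + 1).val = if z.val + 1 = L then 0 else z.val + 1 := by
  have hz := z.val_lt
  rw [ZMod.val_add, ZMod.val_one_eq_one_mod, Nat.add_mod_mod]
  split_ifs with h
  · rw [h, Nat.mod_self]
  · exact Nat.mod_eq_of_lt (by omega)

theorem eq_of_forall_add_one_eq {α : Type*} {g : ZMod L → α} (hg : ∀ z, g (z + 1) = g z)
    (a b : ZMod L) : g a = g b := by
  have hzero (z : ZMod L) : g z = g 0 := by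
    have hper : Function.Periodic g 1 := hg
    simpa using hper.nat_mul_eq z.val
  rw [hzero a, hzero b]

/-- The change of the distance to `0` along the edge of the cycle from `z` to `z + 1`. -/
def cyclicStep (z : ZMod L) : ℚ := (cyclicNorm z : ℚ) - cyclicNorm (z + 1)

theorem cyclicStep_sq (z : ZMod L) : cyclicStep z ^ 2 = if 2 * z.val + 1 = L then 0 else 1 := by
  have hz := z.val_lt
  have hnext := val_add_one z
  rw [cyclicStep, cyclicNorm_eq_min, cyclicNorm_eq_min]
  obtain hlt | heq | hgt := lt_trichotomy (2 * z.val + 1) L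
  · obtain h : min (z + 1).val (L - (z + 1).val) = min z.val (L - z.val) + 1 := by
      split_ifs at hnext <;> omega
    simp [h, hlt.ne]
  · obtain h : min (z + 1).val (L - (z + 1).val) = min z.val (L - z.val) := by
      split_ifs at hnext <;> omega
    simp [h, heq]
  · obtain h : min z.val (L - z.val) = min (z + 1).val (L - (z + 1).val) + 1 := by
      split_ifs at hnext <;> omega
    simp [h, hgt.ne']

theorem sum_cyclicStep_sq : ∑ z : ZMod L, cyclicStep z ^ 2 = 2 * (L / 2 : ℕ) := by
  have hcount : #{z : ZMod L | 2 * z.val + 1 = L} = L % 2 := by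
    obtain ⟨r, hr⟩ | ⟨r, hr⟩ := L.even_or_odd
    · rw [filter_false_of_mem fun z _ => by omega, card_empty]
      omega
    · have hval : ((r : ℕ) : ZMod L).val = r := ZMod.val_cast_of_lt (by omega)
      rw [card_eq_one.2 ⟨(r : ZMod L), ?_⟩]
      · omega
      ext z
      rw [mem_filter_univ, mem_singleton, ← (ZMod.val_injective L).eq_iff, hval]
      omega
  have hsplit := card_filter_add_card_filter_not (s := (univ : Finset (ZMod L)))
    fun z => 2 * z.val + 1 = L
  rw [hcount, card_univ, ZMod.card] at hsplit
  simp only [cyclicStep_sq, ← ite_not (2 * _ + 1 = L), sum_boole]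
  exact_mod_cast (by omega : #{z : ZMod L | ¬2 * z.val + 1 = L} = 2 * (L / 2))

theorem sum_sq_cyclicStep_sub (a b : ZMod L) :
    ∑ z, (cyclicStep (z - a) - cyclicStep (z - b)) ^ 2 =
      2 * (2 * (L / 2 : ℕ) - ∑ z, cyclicStep (z - a) * cyclicStep (z - b)) := by
  have hshift (c : ZMod L) : ∑ z, cyclicStep (z - c) ^ 2 = 2 * (L / 2 : ℕ) := by
    rw [← sum_cyclicStep_sq, ← (Equiv.subRight c).sum_comp fun z => cyclicStep z ^ 2]
    rfl
  calc ∑ z, (cyclicStep (z - a) - cyclicStep (z - b)) ^ 2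
      = ∑ z, cyclicStep (z - a) ^ 2 + ∑ z, cyclicStep (z - b) ^ 2 -
          2 * ∑ z, cyclicStep (z - a) * cyclicStep (z - b) := by
        rw [mul_sum, ← sum_add_distrib, ← sum_sub_distrib]
        exact sum_congr rfl fun z _ => by ring
    _ = _ := by rw [hshift, hshift]; ring

theorem sum_cyclicStep_mul_le (a b : ZMod L) :
    ∑ z, cyclicStep (z - a) * cyclicStep (z - b) ≤ 2 * (L / 2 : ℕ) := by
  have hnonneg : 0 ≤ ∑ z, (cyclicStep (z - a) - cyclicStep (z - b)) ^ 2 :=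
    sum_nonneg fun _ _ => sq_nonneg _
  rw [sum_sq_cyclicStep_sub] at hnonneg
  linarith

theorem sum_cyclicStep_mul_eq_iff (a b : ZMod L) :
    ∑ z, cyclicStep (z - a) * cyclicStep (z - b) = 2 * (L / 2 : ℕ) ↔ a = b := by
  have hsq := sum_sq_cyclicStep_sub a b
  constructor
  · intro h
    rw [h, sub_self, mul_zero, sum_eq_zero_iff_of_nonneg fun _ _ => sq_nonneg _] at hsq
    have hconst := eq_of_forall_add_one_eq
      (g := fun z => (cyclicNorm (z - a) : ℚ) - cyclicNorm (z - b)) (fun z => by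
        have hz := pow_eq_zero_iff two_ne_zero |>.1 (hsq z (mem_univ z))
        rw [cyclicStep, cyclicStep, ← add_sub_right_comm, ← add_sub_right_comm] at hz
        linarith) a b
    simp only [sub_self, cyclicNorm_zero, cyclicNorm_sub_comm b a] at hconst
    have hab : (cyclicNorm (a - b) : ℚ) = 0 := by push_cast at hconst; linarith
    exact sub_eq_zero.1 (cyclicNorm_eq_zero.1 (Nat.cast_eq_zero.1 hab))
  · rintro rfl
    simp only [sub_self, zero_pow two_ne_zero, sum_const_zero] at hsq
    linarith

end CyclicNorm

section Cycle

variable {V : Type*} {G : SimpleGraph V} {L : ℕ} {c : ZMod L → V}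

variable (G) in
/-- A cycle of `G`, of length `L`, given by its vertices in cyclic order. -/
structure IsCycleMap (c : ZMod L → V) : Prop where
  three_le : 3 ≤ L
  injective : Function.Injective c
  adj : ∀ z, G.Adj (c z) (c (z + 1))

theorem IsCycleMap.edge_injective (hc : IsCycleMap G c) :
    Function.Injective fun z => s(c z, c (z + 1)) := by
  intro a b hab
  obtain ⟨h, -⟩ | ⟨h, h'⟩ := Sym2.eq_iff.1 hab
  · exact hc.injective h
  · have htwo : ((2 : ℕ) : ZMod L) = 0 := by
      have := hc.injective h'
      rw [hc.injective h, add_assoc, add_eq_left, one_add_one_eq_two] at this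
      exact_mod_cast this
    have hdvd := Nat.le_of_dvd two_pos ((ZMod.natCast_eq_zero_iff 2 L).1 htwo)
    have := hc.three_le
    omega

theorem le_add_dist (hG : G.Connected) {F : V → ℕ} (hF : ∀ u v, G.Adj u v → F u ≤ F v + 1)
    (x y : V) : F x ≤ F y + G.dist x y := by
  obtain ⟨p, hp⟩ := hG.exists_walk_length_eq_dist x y
  rw [← hp]
  clear hp
  induction p with
  | nil => exact le_self_add
  | cons h q ih =>
    rw [SimpleGraph.Walk.length_cons]
    have := hF _ _ h
    omega

theorem dist_le_cyclicNorm (hG : G.Connected) (hadj : ∀ z, G.Adj (c z) (c (z + 1)))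
    (a b : ZMod L) : G.dist (c a) (c b) ≤ cyclicNorm (a - b) := by
  have hforward (a : ZMod L) (n : ℕ) : G.dist (c a) (c (a + n)) ≤ n := by
    induction n with
    | zero => simp
    | succ n ih =>
      have htri := hG.dist_triangle (u := c a) (v := c (a + n)) (w := c (a + n + 1))
      rw [SimpleGraph.dist_eq_one_iff_adj.2 (hadj (a + n))] at htri
      rw [Nat.cast_succ, ← add_assoc]
      omega
  have hcoe := (a - b).coe_valMinAbs
  obtain h | h := Int.natAbs_eq (a - b).valMinAbs
  · rw [h, Int.cast_natCast, eq_sub_iff_add_eq'] at hcoe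
    have := hforward b (a - b).valMinAbs.natAbs
    rwa [hcoe, SimpleGraph.dist_comm] at this
  · rw [h, Int.cast_neg, Int.cast_natCast, neg_eq_iff_eq_neg, neg_sub, eq_sub_iff_add_eq'] at hcoe
    have := hforward a (a - b).valMinAbs.natAbs
    rwa [hcoe] at this

variable [NeZero L]

/-- The edges of the closed walk that visits the vertices `c z` in cyclic order. -/
noncomputable def cycleEdges (c : ZMod L → V) : Finset (Sym2 V) :=
  univ.image fun z => s(c z, c (z + 1))

theorem mem_cycleEdges {e : Sym2 V} : e ∈ cycleEdges c ↔ ∃ z, s(c z, c (z + 1)) = e := by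
  simp [cycleEdges]

theorem mk_mem_cycleEdges (c : ZMod L → V) (z : ZMod L) : s(c z, c (z + 1)) ∈ cycleEdges c :=
  mem_cycleEdges.2 ⟨z, rfl⟩

theorem exists_apply_eq_of_mem_cycleEdges {e : Sym2 V} (he : e ∈ cycleEdges c) {v : V}
    (hv : v ∈ e) : ∃ z, c z = v := by
  obtain ⟨z, rfl⟩ := mem_cycleEdges.1 he
  obtain rfl | rfl := Sym2.mem_iff.1 hv
  exacts [⟨z, rfl⟩, ⟨z + 1, rfl⟩]

theorem cycleEdges_add_left (c : ZMod L → V) (b : ZMod L) :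
    cycleEdges (fun z => c (b + z)) = cycleEdges c := by
  ext e
  simp only [mem_cycleEdges, ← add_assoc]
  exact (Equiv.addLeft b).exists_congr_left.trans (by simp)

theorem cycleEdges_comp {W : Type*} (φ : V → W) (c : ZMod L → V) :
    cycleEdges (φ ∘ c) = (cycleEdges c).image (Sym2.map φ) := by
  rw [cycleEdges, cycleEdges, image_image]
  rfl

theorem map_mem_cycleEdges_comp {W : Type*} {φ : V → W} (hφ : Function.Injective φ)
    {e : Sym2 V} : Sym2.map φ e ∈ cycleEdges (φ ∘ c) ↔ e ∈ cycleEdges c := by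
  rw [cycleEdges_comp, (Sym2.map.injective hφ).mem_finset_image]

namespace IsCycleMap

theorem card_cycleEdges (hc : IsCycleMap G c) : #(cycleEdges c) = L := by
  rw [cycleEdges, card_image_of_injective _ hc.edge_injective, card_univ, ZMod.card]

theorem sum_cycleEdges (hc : IsCycleMap G c) (F : Sym2 V → ℚ) :
    ∑ e ∈ cycleEdges c, F e = ∑ z, F s(c z, c (z + 1)) :=
  sum_image hc.edge_injective.injOn

theorem cycleEdges_subset [Fintype V] (hc : IsCycleMap G c) : cycleEdges c ⊆ G.edgeFinset := by
  intro e he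
  obtain ⟨z, rfl⟩ := mem_cycleEdges.1 he
  exact SimpleGraph.mem_edgeFinset.2 (hc.adj z)

end IsCycleMap

variable (G) in
/-- A cycle `c` all of whose attachments are separated by it: `p v` is the position on the cycle
of the gate of `v`, through which every path from `v` enters the cycle, so that both ends of an
edge off the cycle have the same gate. -/
structure IsGatedCycle (c : ZMod L → V) (p : V → ZMod L) : Prop extends IsCycleMap G c where
  gate_apply : ∀ z, p (c z) = z
  gate_eq : ∀ ⦃u v⦄, G.Adj u v → s(u, v) ∉ cycleEdges c → p u = p v

namespace IsGatedCycle

variable {p : V → ZMod L}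

theorem dist_eq (hc : IsGatedCycle G c p) (hG : G.Connected) (x : V) (z : ZMod L) :
    G.dist x (c z) = G.dist x (c (p x)) + cyclicNorm (p x - z) := by
  refine le_antisymm (hG.dist_triangle (v := c (p x)) |>.trans ?_) ?_
  · exact Nat.add_le_add_left (dist_le_cyclicNorm hG hc.adj _ _) _
  let F (y : V) : ℕ := G.dist y (c (p y)) + cyclicNorm (p y - z)
  have hFc (a : ZMod L) : F (c a) = cyclicNorm (a - z) := by simp [F, hc.gate_apply]
  have hlip (a b : ZMod L) (hab : cyclicNorm (a - b) ≤ 1) : F (c a) ≤ F (c b) + 1 := by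
    have := cyclicNorm_add_le (a - b) (b - z)
    rw [sub_add_sub_cancel] at this
    rw [hFc, hFc]
    omega
  have hF (u v : V) (huv : G.Adj u v) : F u ≤ F v + 1 := by
    by_cases hmem : s(u, v) ∈ cycleEdges c
    · obtain ⟨a, ha⟩ := mem_cycleEdges.1 hmem
      obtain ⟨rfl, rfl⟩ | ⟨rfl, rfl⟩ := Sym2.eq_iff.1 ha
      · exact hlip _ _ (by simpa [cyclicNorm_neg] using cyclicNorm_one_le)
      · exact hlip _ _ (by simpa using cyclicNorm_one_le)
    · have htri := hG.dist_triangle (u := u) (v := v) (w := c (p v))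
      rw [SimpleGraph.dist_eq_one_iff_adj.2 huv] at htri
      simp only [F, hc.gate_eq huv hmem]
      omega
  simpa [hFc, cyclicNorm_zero] using le_add_dist hG hF x (c z)

theorem dist_cycle (hc : IsGatedCycle G c p) (hG : G.Connected) (a b : ZMod L) :
    G.dist (c a) (c b) = cyclicNorm (a - b) := by
  rw [hc.dist_eq hG, hc.gate_apply, SimpleGraph.dist_self, zero_add]

/-- The gate of an edge off a gated cycle, read off from one of its two ends. -/
noncomputable def edgeGate (p : V → ZMod L) (f : Sym2 V) : ZMod L := p f.out.1

theorem gate_eq_edgeGate (hc : IsGatedCycle G c p) {u v : V} (huv : G.Adj u v)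
    (hmem : s(u, v) ∉ cycleEdges c) : p u = edgeGate p s(u, v) := by
  obtain h | h : s(u, v).out.1 = u ∨ s(u, v).out.1 = v := Sym2.mem_iff.1 (Sym2.out_fst_mem _)
  · rw [edgeGate, h]
  · rw [edgeGate, h, hc.gate_eq huv hmem]

theorem eDist_eq (hc : IsGatedCycle G c p) (hG : G.Connected) {f : Sym2 V} (hf : f ∈ G.edgeSet)
    (hmem : f ∉ cycleEdges c) (z : ZMod L) :
    eDist G f (c z) = eDist G f (c (edgeGate p f)) + cyclicNorm (z - edgeGate p f) := by
  induction f with | _ u v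
  have hu := hc.gate_eq_edgeGate hf hmem
  have hv : p v = edgeGate p s(u, v) := (hc.gate_eq hf hmem).symm.trans hu
  rw [eDist_mk, eDist_mk, hc.dist_eq hG u, hc.dist_eq hG v, hu, hv, min_add_add_right,
    cyclicNorm_sub_comm]

theorem sum_eDist_cycleEdges (hc : IsGatedCycle G c p) (hG : G.Connected) (z : ZMod L) :
    ∑ f ∈ cycleEdges c, (eDist G f (c z) : ℚ) =
      ∑ a : ZMod L, (min (cyclicNorm a) (cyclicNorm (a + 1)) : ℕ) := by
  rw [hc.sum_cycleEdges, Nat.cast_sum, ← Equiv.sum_comp (Equiv.addRight z)]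
  refine sum_congr rfl fun a _ => ?_
  rw [eDist_mk, hc.dist_cycle hG, hc.dist_cycle hG, Equiv.coe_addRight, add_right_comm,
    add_sub_cancel_right, add_sub_cancel_right]

variable [Fintype V]

theorem imbalance_cycle (hc : IsGatedCycle G c p) (hG : G.Connected) (z : ZMod L) :
    imbalance G (c z) (c (z + 1)) =
      ∑ f ∈ G.edgeFinset \ cycleEdges c, cyclicStep (z - edgeGate p f) := by
  rw [imbalance, ← sum_sdiff hc.cycleEdges_subset, sum_sub_distrib (s := cycleEdges c),
    hc.sum_eDist_cycleEdges hG, hc.sum_eDist_cycleEdges hG, sub_self, add_zero]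
  refine sum_congr rfl fun f hf => ?_
  obtain ⟨hfG, hfc⟩ := mem_sdiff.1 hf
  rw [SimpleGraph.mem_edgeFinset] at hfG
  rw [hc.eDist_eq hG hfG hfc, hc.eDist_eq hG hfG hfc (z + 1), cyclicStep, ← add_sub_right_comm]
  push_cast
  ring

theorem sum_sqImbalance (hc : IsGatedCycle G c p) (hG : G.Connected) :
    ∑ e ∈ cycleEdges c, sqImbalance G e =
      ∑ f ∈ (G.edgeFinset \ cycleEdges c) ×ˢ (G.edgeFinset \ cycleEdges c),
        ∑ z, cyclicStep (z - edgeGate p f.1) * cyclicStep (z - edgeGate p f.2) := by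
  simp only [hc.sum_cycleEdges, sqImbalance_mk, hc.imbalance_cycle hG, sq, sum_mul_sum]
  rw [sum_product, sum_comm]
  exact sum_congr rfl fun f _ => sum_comm

theorem sum_const_product (hc : IsGatedCycle G c p) :
    ∑ _f ∈ (G.edgeFinset \ cycleEdges c) ×ˢ (G.edgeFinset \ cycleEdges c), 2 * ((L / 2 : ℕ) : ℚ) =
      2 * (L / 2 : ℕ) * ((#G.edgeFinset : ℚ) - L) ^ 2 := by
  rw [sum_const, card_product, card_sdiff_of_subset hc.cycleEdges_subset, hc.card_cycleEdges,
    nsmul_eq_mul, Nat.cast_mul,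
    Nat.cast_sub (hc.card_cycleEdges ▸ card_le_card hc.cycleEdges_subset)]
  ring

theorem sum_sqImbalance_le (hc : IsGatedCycle G c p) (hG : G.Connected) :
    ∑ e ∈ cycleEdges c, sqImbalance G e ≤ 2 * (L / 2 : ℕ) * ((#G.edgeFinset : ℚ) - L) ^ 2 := by
  rw [hc.sum_sqImbalance hG, ← hc.sum_const_product]
  exact sum_le_sum fun f _ => sum_cyclicStep_mul_le _ _

theorem sum_sqImbalance_eq_iff (hc : IsGatedCycle G c p) (hG : G.Connected) :
    ∑ e ∈ cycleEdges c, sqImbalance G e = 2 * (L / 2 : ℕ) * ((#G.edgeFinset : ℚ) - L) ^ 2 ↔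
      ∃ z₀, ∀ ⦃u v⦄, G.Adj u v → s(u, v) ∉ cycleEdges c → p u = z₀ := by
  rw [hc.sum_sqImbalance hG, ← hc.sum_const_product,
    sum_eq_sum_iff_of_le fun f _ => sum_cyclicStep_mul_le _ _]
  simp only [sum_cyclicStep_mul_eq_iff, mem_product, mem_sdiff, SimpleGraph.mem_edgeFinset]
  constructor
  · intro hall
    by_cases hoff : ∃ f ∈ G.edgeSet, f ∉ cycleEdges c
    · obtain ⟨f, hf, hfc⟩ := hoff
      refine ⟨edgeGate p f, fun u v huv hmem => ?_⟩
      rw [hc.gate_eq_edgeGate huv hmem]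
      exact hall (s(u, v), f) ⟨⟨huv, hmem⟩, hf, hfc⟩
    · exact ⟨0, fun u v huv hmem => (hoff ⟨_, huv, hmem⟩).elim⟩
  · rintro ⟨z₀, hz₀⟩
    have hgate (f : Sym2 V) (hf : f ∈ G.edgeSet) (hfc : f ∉ cycleEdges c) : edgeGate p f = z₀ := by
      induction f with | _ u v
      rw [← hc.gate_eq_edgeGate hf hfc, hz₀ hf hfc]
    exact fun f hf => (hgate _ hf.1.1 hf.1.2).trans (hgate _ hf.2.1 hf.2.2).symm

end IsGatedCycle

end Cycle

section Bound

variable {V : Type*} {G : SimpleGraph V} [Fintype V] {ι : Type*} [Fintype ι] {L : ι → ℕ}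

/-- The edge revised Szeged index of a bundle with `m` edges and cycles of lengths `L i`. -/
def bundleSzeged (m : ℕ) (L : ι → ℕ) : ℚ :=
  (2 * (m : ℚ) ^ 2 - m + ((m : ℚ) - 1) ^ 2 * ∑ i, (L i : ℚ) -
    ∑ i, 2 * ((L i / 2 : ℕ) : ℚ) * ((m : ℚ) - L i) ^ 2) / 4

variable [∀ i, NeZero (L i)] {c : ∀ i, ZMod (L i) → V} {p : ∀ i, V → ZMod (L i)}

theorem four_mul_szRevE_sub_bundleSzeged (hG : G.Connected) (hc : ∀ i, IsCycleMap G (c i))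
    (hdisj : Pairwise (Function.onFun Disjoint fun i => cycleEdges (c i))) :
    4 * (szRevE G - bundleSzeged #G.edgeFinset L) =
      ∑ i, (2 * (L i / 2 : ℕ) * ((#G.edgeFinset : ℚ) - L i) ^ 2 -
        ∑ e ∈ cycleEdges (c i), sqImbalance G e) +
      ∑ e ∈ G.edgeFinset \ univ.biUnion fun i => cycleEdges (c i),
        (((#G.edgeFinset : ℚ) - 1) ^ 2 - sqImbalance G e) := by
  have hsub : (univ.biUnion fun i => cycleEdges (c i)) ⊆ G.edgeFinset :=
    biUnion_subset.2 fun i _ => (hc i).cycleEdges_subset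
  have hcard : (#(G.edgeFinset \ univ.biUnion fun i => cycleEdges (c i)) : ℚ) =
      #G.edgeFinset - ∑ i, (L i : ℚ) := by
    rw [card_sdiff_of_subset hsub, Nat.cast_sub (card_le_card hsub),
      card_biUnion (hdisj.set_pairwise _)]
    simp only [(hc _).card_cycleEdges, Nat.cast_sum]
  have hsum : ∑ e ∈ G.edgeFinset, sqImbalance G e =
      ∑ e ∈ G.edgeFinset \ univ.biUnion fun i => cycleEdges (c i), sqImbalance G e +
        ∑ i, ∑ e ∈ cycleEdges (c i), sqImbalance G e := by
    rw [← sum_sdiff hsub, sum_biUnion (hdisj.set_pairwise _)]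
  rw [szRevE_eq_sum_edgeFinset hG, bundleSzeged, ← sum_div, sum_sub_distrib, sum_sub_distrib,
    sum_sub_distrib, hsum, sum_const, sum_const, nsmul_eq_mul, nsmul_eq_mul, hcard]
  ring

theorem bundleSzeged_le_szRevE (hG : G.Connected) (hc : ∀ i, IsGatedCycle G (c i) (p i))
    (hdisj : Pairwise (Function.onFun Disjoint fun i => cycleEdges (c i))) :
    bundleSzeged #G.edgeFinset L ≤ szRevE G := by
  have hdeficit := four_mul_szRevE_sub_bundleSzeged hG (fun i => (hc i).toIsCycleMap) hdisj
  have hcycles := sum_nonneg fun i (_ : i ∈ univ) => sub_nonneg.2 ((hc i).sum_sqImbalance_le hG)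
  have hoff := sum_nonneg (s := G.edgeFinset \ univ.biUnion fun i => cycleEdges (c i)) fun e he =>
    sub_nonneg.2 (sqImbalance_le hG (mem_sdiff.1 he).1)
  linarith

theorem szRevE_eq_bundleSzeged_iff_gate (hG : G.Connected)
    (hc : ∀ i, IsGatedCycle G (c i) (p i))
    (hdisj : Pairwise (Function.onFun Disjoint fun i => cycleEdges (c i))) :
    szRevE G = bundleSzeged #G.edgeFinset L ↔
      (∀ i, ∃ z₀, ∀ ⦃u v⦄, G.Adj u v → s(u, v) ∉ cycleEdges (c i) → p i u = z₀) ∧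
        ∀ e ∈ G.edgeSet, (∀ i, e ∉ cycleEdges (c i)) → IsPendant G e := by
  have hdeficit := four_mul_szRevE_sub_bundleSzeged hG (fun i => (hc i).toIsCycleMap) hdisj
  have hcycle (i : ι) := sub_nonneg.2 ((hc i).sum_sqImbalance_le hG)
  have hoff (e : Sym2 V) (he : e ∈ G.edgeFinset \ univ.biUnion fun i => cycleEdges (c i)) :=
    sub_nonneg.2 (sqImbalance_le hG (mem_sdiff.1 he).1)
  rw [← sub_eq_zero, ← mul_eq_zero_iff_left (four_ne_zero (α := ℚ)), hdeficit,
    add_eq_zero_iff_of_nonneg (sum_nonneg fun i _ => hcycle i) (sum_nonneg hoff),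
    sum_eq_zero_iff_of_nonneg fun i _ => hcycle i, sum_eq_zero_iff_of_nonneg hoff]
  refine and_congr (forall_congr' fun i => ?_) (forall_congr' fun e => ?_)
  · rw [sub_eq_zero, eq_comm, (hc i).sum_sqImbalance_eq_iff hG]
    exact forall_prop_of_true (mem_univ i)
  · simp only [mem_sdiff, mem_biUnion, mem_univ, true_and, not_exists, and_imp,
      SimpleGraph.mem_edgeFinset]
    refine forall₂_congr fun he _ => ?_
    rw [sub_eq_zero, eq_comm, sqImbalance_eq_iff hG (SimpleGraph.mem_edgeFinset.2 he)]

end Bound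

section Bundle

variable {V : Type*} {G : SimpleGraph V} {ι : Type*} {L : ι → ℕ} [∀ i, NeZero (L i)]
  {c : ∀ i, ZMod (L i) → V} {h : V}

variable (G c h) in
/-- The cycles `c i` and the remaining edges of `G` form a bundle with hub `h`. No two edges of
`G` other than those at `h` belong to different blocks, so for connected `G` the edges off the
cycles are pendant edges at `h`. -/
structure IsBundle : Prop where
  isCycleMap : ∀ i, IsCycleMap G (c i)
  disjoint : Pairwise (Function.onFun Disjoint fun i => cycleEdges (c i))
  exists_hub : ∀ i, ∃ z, c i z = h
  mem_cycleEdges : ∀ i z, c i z ≠ h → ∀ y, G.Adj (c i z) y → s(c i z, y) ∈ cycleEdges (c i)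
  hub_mem : ∀ e ∈ G.edgeSet, (∀ i, e ∉ cycleEdges (c i)) → h ∈ e

namespace IsBundle

theorem apply_ne_of_adj_hub (hB : IsBundle G c h) {v : V} (hv : G.Adj h v)
    (hoff : ∀ i, s(h, v) ∉ cycleEdges (c i)) (i : ι) (z : ZMod (L i)) : c i z ≠ v := by
  rintro rfl
  exact hoff i (Sym2.eq_swap ▸ hB.mem_cycleEdges i z hv.ne' h hv.symm)

theorem eq_hub_of_adj (hB : IsBundle G c h) {v y : V} (hv : ∀ i z, c i z ≠ v) (hvh : v ≠ h)
    (hvy : G.Adj v y) : y = h := by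
  have hmem := hB.hub_mem s(v, y) hvy fun i hi => by
    obtain ⟨z, hz⟩ := exists_apply_eq_of_mem_cycleEdges hi (Sym2.mem_mk_left v y)
    exact hv i z hz
  exact ((Sym2.mem_iff.1 hmem).resolve_left hvh.symm).symm

theorem isPendant (hB : IsBundle G c h) {e : Sym2 V} (he : e ∈ G.edgeSet)
    (hoff : ∀ i, e ∉ cycleEdges (c i)) : IsPendant G e := by
  obtain ⟨v, rfl⟩ := hB.hub_mem e he hoff
  have hhv : G.Adj h v := he
  exact ⟨v, h, Sym2.eq_swap, fun y hy =>
    hB.eq_hub_of_adj (hB.apply_ne_of_adj_hub hhv hoff) hhv.ne' hy⟩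

theorem adj_iff (hB : IsBundle G c h) (hG : G.Connected) {u v : V} :
    G.Adj u v ↔ (∃ i, s(u, v) ∈ cycleEdges (c i)) ∨
      ∃ x, (x ≠ h ∧ ∀ i z, c i z ≠ x) ∧ s(h, x) = s(u, v) := by
  constructor
  · intro huv
    refine or_iff_not_imp_left.2 fun hoff => ?_
    rw [not_exists] at hoff
    obtain ⟨x, hx⟩ := hB.hub_mem s(u, v) huv hoff
    have hhx : G.Adj h x := by rwa [← SimpleGraph.mem_edgeSet, ← hx]
    exact ⟨x, ⟨hhx.ne', hB.apply_ne_of_adj_hub hhx (hx ▸ hoff)⟩, hx.symm⟩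
  · rintro (⟨i, hi⟩ | ⟨x, ⟨hxh, hx⟩, hux⟩)
    · obtain ⟨z, hz⟩ := EdgeSzeged.mem_cycleEdges.1 hi
      rw [← SimpleGraph.mem_edgeSet, ← hz]
      exact (hB.isCycleMap i).adj z
    · rw [← SimpleGraph.mem_edgeSet, ← hux, SimpleGraph.mem_edgeSet, SimpleGraph.adj_comm]
      obtain ⟨_ | ⟨hxy, -⟩⟩ := hG x h
      · exact absurd rfl hxh
      · rwa [← hB.eq_hub_of_adj hx hxh hxy]

theorem eq_of_apply_eq (hB : IsBundle G c h) {i j : ι} {z : ZMod (L i)} {w : ZMod (L j)}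
    (hzw : c i z = c j w) (hz : c i z ≠ h) : i = j := by
  by_contra hij
  have hmem : s(c j w, c j (w + 1)) ∈ cycleEdges (c i) :=
    hzw ▸ hB.mem_cycleEdges i z hz _ (hzw ▸ (hB.isCycleMap j).adj w)
  exact disjoint_left.1 (hB.disjoint hij) hmem (mk_mem_cycleEdges (c j) w)

theorem comp_iso (hB : IsBundle G c h) {W : Type*} {H : SimpleGraph W} (ψ : G ≃g H) :
    IsBundle H (fun i => ψ ∘ c i) (ψ h) where
  isCycleMap i :=
    { three_le := (hB.isCycleMap i).three_le
      injective := ψ.injective.comp (hB.isCycleMap i).injective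
      adj := fun z => ψ.map_adj_iff.2 ((hB.isCycleMap i).adj z) }
  disjoint i j hij := by
    simp only [Function.onFun, cycleEdges_comp, disjoint_image (Sym2.map.injective ψ.injective)]
    exact hB.disjoint hij
  exists_hub i := (hB.exists_hub i).imp fun z hz => congrArg ψ hz
  mem_cycleEdges i z hz y hy := by
    obtain ⟨y, rfl⟩ := ψ.surjective y
    exact (map_mem_cycleEdges_comp ψ.injective).2
      (hB.mem_cycleEdges i z (ne_of_apply_ne ψ hz) y (ψ.map_adj_iff.1 hy))
  hub_mem e he hoff := by
    obtain ⟨e, rfl⟩ : ∃ f, Sym2.map ψ f = e := by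
      induction e with | _ x y
      exact ⟨s(ψ.symm x, ψ.symm y), by simp⟩
    refine Sym2.mem_map.2 ⟨h, hB.hub_mem e (ψ.map_mem_edgeSet_iff.1 he) fun i hi => ?_, rfl⟩
    exact hoff i ((map_mem_cycleEdges_comp ψ.injective).2 hi)

theorem exists_gate (hB : IsBundle G c h) (i : ι) :
    ∃ (p : V → ZMod (L i)) (z₀ : ZMod (L i)), IsGatedCycle G (c i) p ∧
      ∀ ⦃u v⦄, G.Adj u v → s(u, v) ∉ cycleEdges (c i) → p u = z₀ := by
  obtain ⟨z₀, hz₀⟩ := hB.exists_hub i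
  let p : V → ZMod (L i) := Function.extend (c i) id fun _ => z₀
  have hpc (z : ZMod (L i)) : p (c i z) = z := (hB.isCycleMap i).injective.extend_apply ..
  have hp : ∀ ⦃u v⦄, G.Adj u v → s(u, v) ∉ cycleEdges (c i) → p u = z₀ := by
    intro u v huv hoff
    by_cases hu : ∃ z, c i z = u
    · obtain ⟨z, rfl⟩ := hu
      have hz : c i z = h := by
        by_contra hne
        exact hoff (hB.mem_cycleEdges i z hne v huv)
      rw [hz, ← hz₀, hpc]
    · exact Function.extend_apply' _ _ _ hu
  refine ⟨p, z₀, ⟨hB.isCycleMap i, hpc, fun u v huv hoff => ?_⟩, hp⟩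
  rw [hp huv hoff, hp huv.symm (Sym2.eq_swap ▸ hoff)]

theorem szRevE_eq [Fintype V] [Fintype ι] (hB : IsBundle G c h) (hG : G.Connected) :
    szRevE G = bundleSzeged #G.edgeFinset L := by
  choose p z₀ hp hz₀ using hB.exists_gate
  exact (szRevE_eq_bundleSzeged_iff_gate hG hp hB.disjoint).2
    ⟨fun i => ⟨z₀ i, hz₀ i⟩, fun _ => hB.isPendant⟩

end IsBundle

theorem exists_forall_edge_eq {β : Type*} [Nonempty β] (hG : G.Connected) {F : Sym2 V → β}
    (hF : ∀ ⦃x y z⦄, G.Adj x y → G.Adj x z → F s(x, y) = F s(x, z)) :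
    ∃ b, ∀ e ∈ G.edgeSet, F e = b := by
  by_cases hE : ∃ e, e ∈ G.edgeSet
  · obtain ⟨f, hf⟩ := hE
    refine ⟨F f, fun e he => ?_⟩
    induction f with | _ x y
    induction e with | _ u v
    obtain ⟨q⟩ := hG u x
    induction q generalizing v with
    | nil => exact hF he hf
    | cons huw _ ih => exact (hF he huw).trans (Sym2.eq_swap ▸ ih hf _ huw.symm)
  · exact ⟨Classical.arbitrary β, fun e he => (hE ⟨e, he⟩).elim⟩

/-- The vertex `v` is the end of the edge `e` at which the rest of the graph is attached: the
hub `h i` of its cycle, or for an edge off the cycles the end opposite to a leaf. -/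
def IsEdgeHub (G : SimpleGraph V) (c : ∀ i, ZMod (L i) → V) (h : ι → V) (e : Sym2 V) (v : V) :
    Prop :=
  (∃ i, e ∈ cycleEdges (c i) ∧ v = h i) ∨
    (∀ i, e ∉ cycleEdges (c i)) ∧ ∃ u, e = s(u, v) ∧ ∀ y, G.Adj u y → y = v

theorem IsEdgeHub.eq_of_mem_cycleEdges {h : ι → V}
    (hdisj : Pairwise (Function.onFun Disjoint fun i => cycleEdges (c i))) {e : Sym2 V} {v : V}
    (hv : IsEdgeHub G c h e v) {i : ι} (hi : e ∈ cycleEdges (c i)) : v = h i := by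
  obtain ⟨j, hj, rfl⟩ | ⟨hoff, -⟩ := hv
  · obtain rfl : i = j := by
      by_contra hij
      exact disjoint_left.1 (hdisj hij) hi hj
    rfl
  · exact (hoff i hi).elim

theorem IsEdgeHub.eq_of_adj {h : ι → V}
    (hdisj : Pairwise (Function.onFun Disjoint fun i => cycleEdges (c i)))
    (hh : ∀ i z, c i z ≠ h i → ∀ y, G.Adj (c i z) y → s(c i z, y) ∈ cycleEdges (c i))
    {x y z a b : V} (hyz : y ≠ z) (hxz : G.Adj x z) (ha : IsEdgeHub G c h s(x, y) a)
    (hb : IsEdgeHub G c h s(x, z) b) (hxa : x ≠ a) : a = b := by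
  obtain ⟨i, hi, rfl⟩ | ⟨-, u, hu, hleaf⟩ := ha
  · obtain ⟨w, rfl⟩ := exists_apply_eq_of_mem_cycleEdges hi (Sym2.mem_mk_left _ _)
    exact (hb.eq_of_mem_cycleEdges hdisj (hh i w hxa z hxz)).symm
  · obtain ⟨rfl, rfl⟩ | ⟨hxa', -⟩ := Sym2.eq_iff.1 hu
    exacts [(hyz (hleaf z hxz).symm).elim, (hxa hxa').elim]

theorem exists_forall_isEdgeHub (hG : G.Connected) {h : ι → V}
    (hdisj : Pairwise (Function.onFun Disjoint fun i => cycleEdges (c i)))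
    (hh : ∀ i z, c i z ≠ h i → ∀ y, G.Adj (c i z) y → s(c i z, y) ∈ cycleEdges (c i))
    (hpendant : ∀ e ∈ G.edgeSet, (∀ i, e ∉ cycleEdges (c i)) → IsPendant G e) :
    ∃ v, ∀ e ∈ G.edgeSet, IsEdgeHub G c h e v := by
  have := hG.nonempty
  have hex : ∀ e ∈ G.edgeSet, ∃ v, IsEdgeHub G c h e v := by
    intro e he
    by_cases hoff : ∀ i, e ∉ cycleEdges (c i)
    · obtain ⟨u, v, huv, hu⟩ := hpendant e he hoff
      exact ⟨v, Or.inr ⟨hoff, u, huv, hu⟩⟩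
    · obtain ⟨i, hi⟩ := not_forall_not.1 hoff
      exact ⟨h i, Or.inl ⟨i, hi, rfl⟩⟩
  choose! F hF using hex
  obtain ⟨v, hv⟩ := exists_forall_edge_eq hG (F := F) fun x y z hxy hxz => by
    obtain rfl | hyz := eq_or_ne y z
    · rfl
    by_cases hy : x = F s(x, y)
    · by_cases hz : x = F s(x, z)
      · rw [← hy, ← hz]
      · exact ((hF _ hxz).eq_of_adj hdisj hh hyz.symm hxy (hF _ hxy) hz).symm
    · exact (hF _ hxy).eq_of_adj hdisj hh hyz hxz (hF _ hxz) hy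
  exact ⟨v, fun e he => hv e he ▸ hF e he⟩

theorem exists_isBundle_of_szRevE_eq [Fintype V] [Fintype ι] {p : ∀ i, V → ZMod (L i)}
    (hG : G.Connected) (hc : ∀ i, IsGatedCycle G (c i) (p i))
    (hdisj : Pairwise (Function.onFun Disjoint fun i => cycleEdges (c i)))
    (heq : szRevE G = bundleSzeged #G.edgeFinset L) : ∃ h, IsBundle G c h := by
  obtain ⟨hgate, hpendant⟩ := (szRevE_eq_bundleSzeged_iff_gate hG hc hdisj).1 heq
  choose z₀ hz₀ using hgate
  have hcycle (i : ι) (z : ZMod (L i)) (hz : c i z ≠ c i (z₀ i)) (y : V)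
      (hy : G.Adj (c i z) y) : s(c i z, y) ∈ cycleEdges (c i) := by
    by_contra hoff
    exact hz (by rw [← hz₀ i hy hoff, (hc i).gate_apply])
  obtain ⟨h, hh⟩ := exists_forall_isEdgeHub hG hdisj hcycle hpendant
  have hhub (i : ι) : h = c i (z₀ i) :=
    (hh s(c i 0, c i (0 + 1)) ((hc i).adj 0)).eq_of_mem_cycleEdges hdisj (mk_mem_cycleEdges _ 0)
  refine ⟨h, fun i => (hc i).toIsCycleMap, hdisj, fun i => ⟨z₀ i, (hhub i).symm⟩,
    fun i z hz => hcycle i z (hhub i ▸ hz), fun e he hoff => ?_⟩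
  obtain ⟨i, hi, -⟩ | ⟨-, u, rfl, -⟩ := hh e he
  · exact (hoff i hi).elim
  · exact Sym2.mem_mk_right u h

end Bundle

section BundleGraph

variable {k : ℕ} {len : Fin k → ℕ} {p : ℕ}

theorem bundleGraph_adj_hub_petal (i : Fin k) (a : Fin (len i - 1)) :
    (bundleGraph k len p).Adj (Sum.inl ()) (Sum.inr (Sum.inl ⟨i, a⟩)) ↔
      a.val = 0 ∨ a.val = len i - 2 := by
  simp [bundleGraph]

theorem bundleGraph_adj_hub_leaf (j : Fin p) :
    (bundleGraph k len p).Adj (Sum.inl ()) (Sum.inr (Sum.inr j)) := by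
  simp [bundleGraph]

theorem bundleGraph_adj_petal_succ (i : Fin k) {a b : Fin (len i - 1)} (hab : a.val + 1 = b.val) :
    (bundleGraph k len p).Adj (Sum.inr (Sum.inl ⟨i, a⟩)) (Sum.inr (Sum.inl ⟨i, b⟩)) := by
  have hne : a ≠ b := by
    rintro rfl
    omega
  simp [bundleGraph, hab, hne]

variable [∀ i, NeZero (len i)]

/-- The cycles of the bundle in cyclic order, each starting at the hub. -/
def bundleCycle (p : ℕ) (i : Fin k) (z : ZMod (len i)) :
    Unit ⊕ ((Σ i : Fin k, Fin (len i - 1)) ⊕ Fin p) :=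
  if hz : z = 0 then Sum.inl ()
  else Sum.inr (Sum.inl ⟨i, z.val - 1, by
    have := z.val_lt
    have := (ZMod.val_ne_zero z).2 hz
    omega⟩)

theorem bundleCycle_zero (i : Fin k) : bundleCycle p i (0 : ZMod (len i)) = Sum.inl () :=
  dif_pos rfl

theorem bundleCycle_of_val {i : Fin k} {z : ZMod (len i)} {a : Fin (len i - 1)}
    (hz : z.val = a.val + 1) : bundleCycle p i z = Sum.inr (Sum.inl ⟨i, a⟩) := by
  have hz0 : z ≠ 0 := (ZMod.val_ne_zero z).1 (by omega)
  simp [bundleCycle, hz0, hz]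

theorem bundleCycle_ne_leaf (i : Fin k) (z : ZMod (len i)) (j : Fin p) :
    bundleCycle p i z ≠ Sum.inr (Sum.inr j) := by
  rw [bundleCycle]
  split_ifs <;> simp

theorem bundleCycle_injective (i : Fin k) :
    Function.Injective (bundleCycle p i : ZMod (len i) → _) := by
  intro z w hzw
  rw [bundleCycle, bundleCycle] at hzw
  split_ifs at hzw with hz hw hw
  · rw [hz, hw]
  · simp only [Sum.inr.injEq, Sum.inl.injEq, Sigma.mk.injEq, heq_eq_eq, true_and,
      Fin.mk.injEq] at hzw
    have := (ZMod.val_ne_zero z).2 hz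
    have := (ZMod.val_ne_zero w).2 hw
    exact ZMod.val_injective _ (by omega)

theorem eq_zero_of_bundleCycle_eq {i j : Fin k} (hij : i ≠ j) {z : ZMod (len i)}
    {w : ZMod (len j)} (hzw : bundleCycle p i z = bundleCycle p j w) : z = 0 := by
  rw [bundleCycle, bundleCycle] at hzw
  split_ifs at hzw with hz hw hw
  · exact hz
  · simp only [Sum.inr.injEq, Sum.inl.injEq, Sigma.mk.injEq] at hzw
    exact (hij hzw.1).elim

theorem bundleGraph_adj_bundleCycle (hlen : ∀ i, 3 ≤ len i) (i : Fin k) (z : ZMod (len i)) :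
    (bundleGraph k len p).Adj (bundleCycle p i z) (bundleCycle p i (z + 1)) := by
  have hi := hlen i
  have hz := z.val_lt
  have hsucc := val_add_one z
  obtain rfl | hz0 := eq_or_ne z 0
  · rw [ZMod.val_zero, if_neg (by omega)] at hsucc
    rw [bundleCycle_zero, bundleCycle_of_val (a := ⟨0, by omega⟩) hsucc, bundleGraph_adj_hub_petal]
    exact Or.inl rfl
  rw [← ZMod.val_ne_zero] at hz0
  rw [bundleCycle_of_val (a := ⟨z.val - 1, by omega⟩) (by simp only; omega)]
  split_ifs at hsucc with hlast
  · rw [(ZMod.val_eq_zero _).1 hsucc, bundleCycle_zero, SimpleGraph.adj_comm,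
      bundleGraph_adj_hub_petal]
    exact Or.inr (by simp only; omega)
  · rw [bundleCycle_of_val (a := ⟨z.val, by omega⟩) hsucc]
    exact bundleGraph_adj_petal_succ i (by simp only; omega)

theorem isCycleMap_bundleCycle (hlen : ∀ i, 3 ≤ len i) (i : Fin k) :
    IsCycleMap (bundleGraph k len p) (bundleCycle p i : ZMod (len i) → _) :=
  ⟨hlen i, bundleCycle_injective i, bundleGraph_adj_bundleCycle hlen i⟩

theorem hub_petal_mem_cycleEdges (hlen : ∀ i, 3 ≤ len i) (i : Fin k) {a : Fin (len i - 1)}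
    (ha : a.val = 0 ∨ a.val = len i - 2) :
    s(Sum.inl (), Sum.inr (Sum.inl ⟨i, a⟩)) ∈
      cycleEdges (bundleCycle p i : ZMod (len i) → _) := by
  have hi := hlen i
  obtain ha | ha := ha
  · have hz := val_add_one (0 : ZMod (len i))
    rw [ZMod.val_zero, if_neg (by omega)] at hz
    refine mem_cycleEdges.2 ⟨0, ?_⟩
    rw [bundleCycle_zero, bundleCycle_of_val (a := a) (by omega)]
  · let z : ZMod (len i) := (len i - 1 : ℕ)
    have hval : z.val = len i - 1 := ZMod.val_natCast_of_lt (by omega)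
    have hz : z + 1 = 0 := by
      rw [← ZMod.val_eq_zero, val_add_one, if_pos (by omega)]
    refine mem_cycleEdges.2 ⟨z, ?_⟩
    rw [hz, bundleCycle_zero, bundleCycle_of_val (a := a) (by omega), Sym2.eq_swap]

theorem petal_succ_mem_cycleEdges (i : Fin k) {a b : Fin (len i - 1)} (hab : a.val + 1 = b.val) :
    s(Sum.inr (Sum.inl ⟨i, a⟩), Sum.inr (Sum.inl ⟨i, b⟩)) ∈
      cycleEdges (bundleCycle p i : ZMod (len i) → _) := by
  let z : ZMod (len i) := (a.val + 1 : ℕ)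
  have hval : z.val = a.val + 1 := ZMod.val_natCast_of_lt (by omega)
  have hz := val_add_one z
  rw [if_neg (by omega)] at hz
  refine mem_cycleEdges.2 ⟨z, ?_⟩
  rw [bundleCycle_of_val (a := a) hval, bundleCycle_of_val (a := b) (by omega)]

theorem bundleGraph_adj_iff (hlen : ∀ i, 3 ≤ len i)
    {x y : Unit ⊕ ((Σ i : Fin k, Fin (len i - 1)) ⊕ Fin p)} :
    (bundleGraph k len p).Adj x y ↔
      (∃ i, s(x, y) ∈ cycleEdges (bundleCycle p i : ZMod (len i) → _)) ∨
        ∃ j, s(Sum.inl (), Sum.inr (Sum.inr j)) = s(x, y) := by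
  constructor
  · obtain _ | ⟨i, a⟩ | j := x <;> obtain _ | ⟨i', b⟩ | j' := y <;> intro hxy
    case inl.inl => simp at hxy
    case inl.inr.inl =>
      exact Or.inl ⟨i', hub_petal_mem_cycleEdges hlen i' ((bundleGraph_adj_hub_petal i' b).1 hxy)⟩
    case inl.inr.inr => exact Or.inr ⟨j', rfl⟩
    case inr.inl.inl =>
      exact Or.inl ⟨i, Sym2.eq_swap ▸
        hub_petal_mem_cycleEdges hlen i ((bundleGraph_adj_hub_petal i a).1 hxy.symm)⟩
    case inr.inl.inr.inl =>
      obtain ⟨-, ⟨rfl, hab⟩ | ⟨rfl, hba⟩⟩ := hxy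
      exacts [Or.inl ⟨i, petal_succ_mem_cycleEdges i hab⟩,
        Or.inl ⟨i', Sym2.eq_swap ▸ petal_succ_mem_cycleEdges i' hba⟩]
    case inr.inl.inr.inr => simp [bundleGraph] at hxy
    case inr.inr.inl => exact Or.inr ⟨j, Sym2.eq_swap⟩
    case inr.inr.inr.inl => simp [bundleGraph] at hxy
    case inr.inr.inr.inr => simp [bundleGraph] at hxy
  · rintro (⟨i, hi⟩ | ⟨j, hj⟩)
    · obtain ⟨z, hz⟩ := mem_cycleEdges.1 hi
      rw [← SimpleGraph.mem_edgeSet, ← hz]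
      exact bundleGraph_adj_bundleCycle hlen i z
    · rw [← SimpleGraph.mem_edgeSet, ← hj]
      exact bundleGraph_adj_hub_leaf j

theorem isBundle_bundleGraph (hlen : ∀ i, 3 ≤ len i) :
    IsBundle (bundleGraph k len p) (bundleCycle p) (Sum.inl ()) where
  isCycleMap := isCycleMap_bundleCycle hlen
  disjoint i j hij := by
    refine disjoint_left.2 fun e hi hj => ?_
    obtain ⟨z, rfl⟩ := mem_cycleEdges.1 hi
    have hzero {w : ZMod (len i)} (hw : bundleCycle p i w ∈
        s(bundleCycle p i z, bundleCycle p i (z + 1))) : w = 0 := by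
      obtain ⟨w', hw'⟩ := exists_apply_eq_of_mem_cycleEdges hj hw
      exact eq_zero_of_bundleCycle_eq hij hw'.symm
    have hzz : z = z + 1 :=
      (hzero (Sym2.mem_mk_left _ _)).trans (hzero (Sym2.mem_mk_right _ _)).symm
    exact (bundleGraph_adj_bundleCycle (p := p) hlen i z).ne (congrArg _ hzz)
  exists_hub i := ⟨0, bundleCycle_zero i⟩
  mem_cycleEdges i z hz y hy := by
    obtain ⟨j, hj⟩ | ⟨j, hj⟩ := (bundleGraph_adj_iff hlen).1 hy
    · obtain ⟨w, hw⟩ := exists_apply_eq_of_mem_cycleEdges hj (Sym2.mem_mk_left _ _)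
      obtain rfl | hij := eq_or_ne i j
      · exact hj
      · rw [eq_zero_of_bundleCycle_eq hij hw.symm] at hz
        exact (hz (bundleCycle_zero i)).elim
    · obtain ⟨h, -⟩ | ⟨-, h⟩ := Sym2.eq_iff.1 hj
      exacts [(hz h.symm).elim, (bundleCycle_ne_leaf i z j h.symm).elim]
  hub_mem e he hoff := by
    induction e with | _ x y
    obtain ⟨i, hi⟩ | ⟨j, hj⟩ := (bundleGraph_adj_iff hlen).1 he
    · exact (hoff i hi).elim
    · exact hj ▸ Sym2.mem_mk_left _ _

end BundleGraph

section BundleIso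

variable {V : Type*} {G : SimpleGraph V} {k : ℕ} {len : Fin k → ℕ}
  {c : ∀ i, ZMod (len i) → V} {h : V} {b : ∀ i, ZMod (len i)} {p : ℕ} {leaf : Fin p → V}

/-- The map from the vertices of `bundleGraph` to those of a graph containing cycles `c i`, each
unrolled from its position `b i` at the hub `h`, and leaves `leaf j`. -/
def bundleMap (c : ∀ i, ZMod (len i) → V) (h : V) (b : ∀ i, ZMod (len i)) (leaf : Fin p → V) :
    Unit ⊕ ((Σ i : Fin k, Fin (len i - 1)) ⊕ Fin p) → V :=
  Sum.elim (fun _ => h) (Sum.elim (fun x => c x.1 (b x.1 + (x.2.val + 1 : ℕ))) leaf)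

variable [∀ i, NeZero (len i)]

theorem bundleMap_comp_bundleCycle (hb : ∀ i, c i (b i) = h) (i : Fin k) :
    bundleMap c h b leaf ∘ bundleCycle p i = fun z => c i (b i + z) := by
  funext z
  obtain rfl | hz := eq_or_ne z 0
  · rw [Function.comp_apply, bundleCycle_zero, add_zero, hb]
    rfl
  · have hval := (ZMod.val_ne_zero z).2 hz
    have hlt := z.val_lt
    rw [Function.comp_apply,
      bundleCycle_of_val (a := ⟨z.val - 1, by omega⟩) (by simp only; omega)]
    simp only [bundleMap, Sum.elim_inr, Sum.elim_inl, Nat.sub_add_cancel (Nat.pos_of_ne_zero hval),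
      ZMod.natCast_zmod_val]

theorem bundleMap_injective (hB : IsBundle G c h) (hb : ∀ i, c i (b i) = h)
    (hleaf : Function.Injective leaf) (hoff : ∀ j, leaf j ≠ h ∧ ∀ i z, c i z ≠ leaf j) :
    Function.Injective (bundleMap c h b leaf) := by
  have hval (i : Fin k) (a : Fin (len i - 1)) : ((a.val + 1 : ℕ) : ZMod (len i)).val = a.val + 1 :=
    ZMod.val_natCast_of_lt (by omega)
  have hne (i : Fin k) (a : Fin (len i - 1)) : c i (b i + (a.val + 1 : ℕ)) ≠ h := by
    rw [← hb i, (hB.isCycleMap i).injective.ne_iff, Ne, add_eq_left, ← ZMod.val_eq_zero, hval]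
    exact Nat.succ_ne_zero _
  refine Function.Injective.sumElim (Function.injective_of_subsingleton _)
    (Function.Injective.sumElim ?_ hleaf fun x j => (hoff j).2 _ _) ?_
  · rintro ⟨i, a⟩ ⟨j, a'⟩ heq
    obtain rfl : i = j := hB.eq_of_apply_eq heq (hne i a)
    have := congrArg ZMod.val (add_left_cancel ((hB.isCycleMap i).injective heq))
    rw [hval, hval, Nat.add_right_cancel_iff] at this
    exact congrArg (Sigma.mk i) (Fin.ext this)
  · rintro - (⟨i, a⟩ | j)
    exacts [(hne i a).symm, (hoff j).1.symm]

theorem bundleMap_surjective (hb : ∀ i, c i (b i) = h)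
    (hleaf : ∀ v, v ≠ h → (∀ i z, c i z ≠ v) → ∃ j, leaf j = v) :
    Function.Surjective (bundleMap c h b leaf) := by
  intro v
  obtain rfl | hvh := eq_or_ne v h
  · exact ⟨Sum.inl (), rfl⟩
  by_cases hv : ∃ i z, c i z = v
  · obtain ⟨i, z, rfl⟩ := hv
    exact ⟨bundleCycle p i (z - b i),
      (congrFun (bundleMap_comp_bundleCycle hb i) _).trans (by rw [add_sub_cancel])⟩
  · obtain ⟨j, rfl⟩ := hleaf v hvh (by simpa using hv)
    exact ⟨Sum.inr (Sum.inr j), rfl⟩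

theorem adj_bundleMap_iff (hB : IsBundle G c h) (hG : G.Connected) (hb : ∀ i, c i (b i) = h)
    (hinj : Function.Injective (bundleMap c h b leaf))
    (hleaf : ∀ v, (v ≠ h ∧ ∀ i z, c i z ≠ v) ↔ ∃ j, leaf j = v)
    {x y : Unit ⊕ ((Σ i : Fin k, Fin (len i - 1)) ⊕ Fin p)} :
    G.Adj (bundleMap c h b leaf x) (bundleMap c h b leaf y) ↔ (bundleGraph k len p).Adj x y := by
  rw [bundleGraph_adj_iff fun i => (hB.isCycleMap i).three_le, hB.adj_iff hG, ← Sym2.map_mk]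
  refine or_congr (exists_congr fun i => ?_) ?_
  · rw [← cycleEdges_add_left _ (b i), ← bundleMap_comp_bundleCycle hb i,
      map_mem_cycleEdges_comp hinj]
  · have hmap (j : Fin p) : s(h, leaf j) =
        Sym2.map (bundleMap c h b leaf) s(Sum.inl (), Sum.inr (Sum.inr j)) := rfl
    simp only [hleaf, exists_exists_eq_and, hmap, (Sym2.map.injective hinj).eq_iff]

theorem card_bundleGraph_vertices :
    Fintype.card (Unit ⊕ ((Σ i : Fin k, Fin (len i - 1)) ⊕ Fin p)) + k =
      1 + ∑ i, len i + p := by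
  have hsum : ∑ i, len i = ∑ i, (len i - 1) + k := by
    calc ∑ i, len i = ∑ i, (len i - 1 + 1) :=
          sum_congr rfl fun i _ => (Nat.sub_add_cancel (NeZero.one_le)).symm
      _ = ∑ i, (len i - 1) + k := by simp [sum_add_distrib]
  simp only [Fintype.card_sum, Fintype.card_unit, Fintype.card_sigma, Fintype.card_fin]
  omega

theorem IsBundle.nonempty_iso [Fintype V] (hB : IsBundle G c h) (hG : G.Connected) :
    Nonempty (G ≃g bundleGraph k len (Fintype.card V + k - 1 - ∑ i, len i)) := by
  choose b hb using hB.exists_hub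
  let e := (Fintype.equivFin {v // v ≠ h ∧ ∀ i z, c i z ≠ v}).symm
  have hleaf (v : V) : (v ≠ h ∧ ∀ i z, c i z ≠ v) ↔ ∃ j, (e j : V) = v := by
    rw [← e.surjective.exists (p := fun x => x.1 = v), Subtype.exists]
    simp
  have hinj : Function.Injective (bundleMap c h b fun j => (e j : V)) :=
    bundleMap_injective hB hb (Subtype.val_injective.comp e.injective) fun j => (e j).2
  have hsurj : Function.Surjective (bundleMap c h b fun j => (e j : V)) :=
    bundleMap_surjective hb fun v hvh hv => (hleaf v).1 ⟨hvh, hv⟩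
  have hcard :=
    card_bundleGraph_vertices (len := len) (p := Fintype.card {v // v ≠ h ∧ ∀ i z, c i z ≠ v})
  rw [Fintype.card_of_bijective ⟨hinj, hsurj⟩] at hcard
  rw [hcard, add_assoc, Nat.add_sub_cancel_left, Nat.add_sub_cancel_left]
  exact ⟨(⟨Equiv.ofBijective _ ⟨hinj, hsurj⟩, adj_bundleMap_iff hB hG hb hinj hleaf⟩ :
    bundleGraph k len _ ≃g G).symm⟩

theorem exists_isBundle_of_iso (hlen : ∀ i, 3 ≤ len i) (ψ : bundleGraph k len p ≃g G) :
    ∃ (c : ∀ i, ZMod (len i) → V) (h : V), IsBundle G c h :=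
  ⟨_, _, (isBundle_bundleGraph hlen).comp_iso ψ⟩

end BundleIso

section Block

variable {V : Type*} {G : SimpleGraph V}

namespace IsCycleMap

variable {L : ℕ} [NeZero L] {c : ZMod L → V}

theorem reachable_deleteEdges_pair (hc : IsCycleMap G c) {x y : ZMod L} (hxy : y ≠ x) :
    (G.deleteEdges {s(c (x - 1), c x), s(c x, c (x + 1))}).Reachable (c (x + 1)) (c y) := by
  have hstep (z : ZMod L) (hz : z ≠ x) (hz' : z ≠ x - 1) :
      (G.deleteEdges {s(c (x - 1), c x), s(c x, c (x + 1))}).Adj (c z) (c (z + 1)) := by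
    have hprev := hc.edge_injective.ne hz'
    rw [sub_add_cancel] at hprev
    exact SimpleGraph.deleteEdges_adj.2 ⟨hc.adj z, not_or.2 ⟨hprev, hc.edge_injective.ne hz⟩⟩
  have hwalk (n : ℕ) (hn : n + 1 < L) :
      (G.deleteEdges {s(c (x - 1), c x), s(c x, c (x + 1))}).Reachable
        (c (x + 1)) (c (x + 1 + n)) := by
    have hne {r : ℕ} (hr : r + 1 < L) : ((r + 1 : ℕ) : ZMod L) ≠ 0 := by
      rw [← ZMod.val_ne_zero, ZMod.val_natCast_of_lt hr]
      exact r.succ_ne_zero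
    induction n with
    | zero => simp
    | succ n ih =>
      have hadj := hstep (x + 1 + n) (fun h => hne (r := n) (by omega) ?_)
        (fun h => hne (r := n + 1) (by omega) ?_)
      · rw [Nat.cast_succ, ← add_assoc]
        exact (ih (by omega)).trans hadj.reachable
      · rw [add_assoc, add_eq_left] at h
        rw [← h, Nat.cast_succ, add_comm]
      · rw [eq_sub_iff_add_eq, add_assoc, add_assoc, add_eq_left] at h
        rw [← h]
        push_cast
        ring
  have hval : (y - (x + 1)).val + 1 < L := by
    refine lt_of_le_of_ne (ZMod.val_lt _) fun h => hxy ?_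
    have := val_add_one (y - (x + 1))
    rw [if_pos h, ZMod.val_eq_zero, ← sub_sub, sub_add_cancel, sub_eq_zero] at this
    exact this
  simpa using hwalk _ hval

/-- If a path off the cycle `c` joined two of its vertices, it would close up with a part of `c`
into a cycle that shares the edge after `x` with `c` but misses the edge before `x`. -/
theorem eq_of_reachable (hc : IsCycleMap G c)
    (hblock : ∀ ⦃b⦄ (q : G.Walk b b), q.IsCycle → ∀ x y, x ≠ y → c x ∈ q.support →
      c y ∈ q.support → ∀ e ∈ cycleEdges c, e ∈ q.edges) {x y : ZMod L}
    (hxy : (G.deleteEdges (cycleEdges c)).Reachable (c x) (c y)) : x = y := by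
  by_contra hne
  have hsucc (z : ZMod L) : z ≠ z + 1 := ne_of_apply_ne c (hc.adj z).ne
  have hprev : s(c (x - 1), c x) ∈ cycleEdges c := by simpa using mk_mem_cycleEdges c (x - 1)
  let H : SimpleGraph V := G.deleteEdges {s(c (x - 1), c x)}
  have hH : H.Adj (c x) (c (x + 1)) := by
    refine SimpleGraph.deleteEdges_adj.2 ⟨hc.adj x, fun h => ?_⟩
    have hx : x = x - 1 := hc.edge_injective (by simpa using h)
    exact hsucc (x - 1) (by rw [sub_add_cancel, ← hx])
  have hreach : (H.deleteEdges {s(c x, c (x + 1))}).Reachable (c x) (c (x + 1)) := by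
    rw [SimpleGraph.deleteEdges_deleteEdges, Set.singleton_union]
    refine (hxy.mono (SimpleGraph.deleteEdges_anti ?_)).trans
      (hc.reachable_deleteEdges_pair (Ne.symm hne)).symm
    exact Set.insert_subset hprev (Set.singleton_subset_iff.2 (mk_mem_cycleEdges c x))
  obtain ⟨u, q, hq, hmem⟩ :=
    SimpleGraph.adj_and_reachable_delete_edges_iff_exists_cycle.1 ⟨hH, hreach⟩
  have hle : H ≤ G := SimpleGraph.deleteEdges_le _
  have hall := hblock (q.mapLe hle) (hq.mapLe hle) x (x + 1) (hsucc x)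
    (by simpa using q.fst_mem_support_of_mem_edges hmem)
    (by simpa using q.snd_mem_support_of_mem_edges hmem) _ hprev
  rw [SimpleGraph.Walk.edges_mapLe_eq_edges] at hall
  exact (SimpleGraph.deleteEdges_adj.1 (q.edges_subset_edgeSet hall)).2 rfl

theorem exists_isGatedCycle (hc : IsCycleMap G c) (hG : G.Connected)
    (hblock : ∀ ⦃b⦄ (q : G.Walk b b), q.IsCycle → ∀ x y, x ≠ y → c x ∈ q.support →
      c y ∈ q.support → ∀ e ∈ cycleEdges c, e ∈ q.edges) : ∃ p, IsGatedCycle G c p := by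
  have hreach (v : V) : ∃ z, (G.deleteEdges (cycleEdges c)).Reachable v (c z) := by
    obtain ⟨w⟩ := hG v (c 0)
    generalize hx : c 0 = x at w
    induction w with
    | nil => exact ⟨0, hx ▸ .rfl⟩
    | @cons u v _ huv _ ih =>
      by_cases hmem : s(u, v) ∈ cycleEdges c
      · obtain ⟨z, rfl⟩ := exists_apply_eq_of_mem_cycleEdges hmem (Sym2.mem_mk_left u v)
        exact ⟨z, .rfl⟩
      · exact (ih hx).imp fun z hz =>
          (SimpleGraph.deleteEdges_adj.2 ⟨huv, hmem⟩).reachable.trans hz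
  choose p hp using hreach
  refine ⟨p, hc, fun z => (hc.eq_of_reachable hblock (hp (c z))).symm, fun u v huv hmem => ?_⟩
  have huv' : (G.deleteEdges (cycleEdges c)).Adj u v := SimpleGraph.deleteEdges_adj.2 ⟨huv, hmem⟩
  exact hc.eq_of_reachable hblock ((hp u).symm.trans (huv'.reachable.trans (hp v)))

end IsCycleMap

/-- The vertices of a closed walk in cyclic order. -/
def cycleOfWalk {a : V} (w : G.Walk a a) (z : ZMod w.length) : V := w.getVert z.val

variable {a : V} {w : G.Walk a a} [NeZero w.length]

theorem cycleOfWalk_add_one (z : ZMod w.length) :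
    cycleOfWalk w (z + 1) = w.getVert (z.val + 1) := by
  rw [cycleOfWalk, val_add_one]
  split_ifs with hz
  · rw [hz, w.getVert_zero, w.getVert_length]
  · rfl

theorem mem_cycleEdges_cycleOfWalk {e : Sym2 V} :
    e ∈ cycleEdges (cycleOfWalk w) ↔ e ∈ w.edges := by
  induction e with | _ x y
  rw [SimpleGraph.Walk.mk_mem_edges_iff_exists, mem_cycleEdges]
  constructor
  · rintro ⟨z, hz⟩
    exact ⟨z.val, z.val_lt, by rw [← hz, cycleOfWalk_add_one, cycleOfWalk]⟩
  · rintro ⟨i, hi, h⟩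
    refine ⟨i, ?_⟩
    rw [cycleOfWalk_add_one, cycleOfWalk, ZMod.val_natCast_of_lt hi, h]

theorem isCycleMap_cycleOfWalk (hw : w.IsCycle) : IsCycleMap G (cycleOfWalk w) where
  three_le := hw.three_le_length
  injective x y hxy := ZMod.val_injective _ <|
    hw.getVert_injOn' (Nat.le_pred_of_lt x.val_lt) (Nat.le_pred_of_lt y.val_lt) hxy
  adj z := by
    rw [cycleOfWalk_add_one]
    exact w.adj_getVert_succ z.val_lt

theorem exists_isGatedCycle_cycleOfWalk (hG : G.Connected) (hw : w.IsCycle)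
    (hblock : ∀ ⦃b⦄ (q : G.Walk b b), q.IsCycle → w.edges.toFinset ≠ q.edges.toFinset →
      #(w.support.toFinset ∩ q.support.toFinset) ≤ 1) :
    ∃ p, IsGatedCycle G (cycleOfWalk w) p := by
  refine (isCycleMap_cycleOfWalk hw).exists_isGatedCycle hG fun b q hq x y hxy hx hy e he => ?_
  have hedges : w.edges.toFinset = q.edges.toFinset := by
    by_contra hne
    have hmem {z : ZMod w.length} (hz : cycleOfWalk w z ∈ q.support) :
        cycleOfWalk w z ∈ w.support.toFinset ∩ q.support.toFinset :=
      mem_inter.2 ⟨List.mem_toFinset.2 (w.getVert_mem_support _), List.mem_toFinset.2 hz⟩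
    exact hxy ((isCycleMap_cycleOfWalk hw).injective
      (card_le_one.1 (hblock q hq hne) _ (hmem hx) _ (hmem hy)))
  rw [← List.mem_toFinset, ← hedges, List.mem_toFinset]
  exact mem_cycleEdges_cycleOfWalk.1 he

end Block

theorem bundleSzeged_eq_of_parity {k t m : ℕ} {L : Fin k → ℕ}
    (hodd : ∀ i : Fin k, (i : ℕ) < t → Odd (L i))
    (heven : ∀ i : Fin k, t ≤ (i : ℕ) → Even (L i)) :
    bundleSzeged m L =
      (2 * (m : ℚ) ^ 2 - m) / 4 + ((m : ℚ) - 1) ^ 2 * (∑ i, (L i : ℚ)) / 4 -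
        (∑ i ∈ univ.filter (fun i : Fin k => (i : ℕ) < t),
          ((L i : ℚ) - 1) * ((m : ℚ) - L i) ^ 2) / 4 -
        (∑ i ∈ univ.filter (fun i : Fin k => t ≤ (i : ℕ)),
          (L i : ℚ) * ((m : ℚ) - L i) ^ 2) / 4 := by
  have hsum : ∑ i, 2 * ((L i / 2 : ℕ) : ℚ) * ((m : ℚ) - L i) ^ 2 =
      ∑ i with i.val < t, ((L i : ℚ) - 1) * ((m : ℚ) - L i) ^ 2 +
        ∑ i with t ≤ i.val, (L i : ℚ) * ((m : ℚ) - L i) ^ 2 := by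
    rw [← sum_filter_add_sum_filter_not univ fun i : Fin k => i.val < t]
    simp only [not_lt]
    refine congrArg₂ _ (sum_congr rfl fun i hi => ?_) (sum_congr rfl fun i hi => ?_)
    · obtain ⟨r, hr⟩ := hodd i (mem_filter.1 hi).2
      rw [hr, show (2 * r + 1) / 2 = r by omega]
      push_cast
      ring
    · obtain ⟨r, hr⟩ := (heven i (mem_filter.1 hi).2).two_dvd
      rw [hr, Nat.mul_div_cancel_left r two_pos]
      push_cast
      rfl
  rw [bundleSzeged, hsum]
  ring

end EdgeSzeged

open EdgeSzeged in
theorem stmt10_general {V : Type*} [Fintype V] (G : SimpleGraph V) (hG : G.Connected) {k : ℕ}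
    {a : Fin k → V} (w : ∀ i, G.Walk (a i) (a i)) (hcyc : ∀ i, (w i).IsCycle)
    (hblock : ∀ i ⦃b⦄ (q : G.Walk b b), q.IsCycle → (w i).edges.toFinset ≠ q.edges.toFinset →
      #((w i).support.toFinset ∩ q.support.toFinset) ≤ 1)
    (hdisj : ∀ i j, i ≠ j → ∀ e ∈ (w i).edges, e ∉ (w j).edges) :
    bundleSzeged #G.edgeFinset (fun i => (w i).length) ≤ szRevE G ∧
      (szRevE G = bundleSzeged #G.edgeFinset (fun i => (w i).length) ↔
        Nonempty (G ≃g bundleGraph k (fun i => (w i).length)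
          (Fintype.card V + k - 1 - ∑ i, (w i).length))) := by
  have hthree (i : Fin k) : 3 ≤ (w i).length := (hcyc i).three_le_length
  have hne (i : Fin k) : NeZero (w i).length := ⟨by linarith [hthree i]⟩
  have hdisj' : Pairwise (Function.onFun Disjoint fun i => cycleEdges (cycleOfWalk (w i))) :=
    fun i j hij => disjoint_left.2 fun e hi hj => hdisj i j hij e
      (mem_cycleEdges_cycleOfWalk.1 hi) (mem_cycleEdges_cycleOfWalk.1 hj)
  choose p hp using fun i => exists_isGatedCycle_cycleOfWalk hG (hcyc i) (hblock i)
  refine ⟨bundleSzeged_le_szRevE hG hp hdisj', fun heq => ?_, fun ⟨ψ⟩ => ?_⟩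
  · obtain ⟨h, hB⟩ := exists_isBundle_of_szRevE_eq hG hp hdisj' heq
    exact hB.nonempty_iso hG
  · obtain ⟨c, h, hB⟩ := exists_isBundle_of_iso hthree ψ.symm
    exact hB.szRevE_eq hG

/-- lower bound for the edge revised Szeged index of a cactus with `n`
vertices, `k` cycles of lengths `m_1, …, m_k` (the first `t` odd, the rest even) and `m`
edges, with equality iff `G` is the bundle `G(m_1, …, m_k)`. -/
theorem stmt10 {V : Type*} [Fintype V] (G : SimpleGraph V) (hG : IsCactus G)
    (n k t m : ℕ) (hn : Fintype.card V = n) (hm : G.edgeFinset.card = m)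
    (hkm : m = n - 1 + k) (ht : t ≤ k)
    (mvec : Fin k → ℕ) (hge : ∀ i, 3 ≤ mvec i)
    (hodd : ∀ i : Fin k, (i : ℕ) < t → Odd (mvec i))
    (heven : ∀ i : Fin k, t ≤ (i : ℕ) → Even (mvec i))
    (c : Fin k → V) (w : ∀ i, G.Walk (c i) (c i))
    (hcyc : ∀ i, (w i).IsCycle)
    (hlen : ∀ i, (w i).length = mvec i)
    (hdisj : ∀ i j, i ≠ j → ∀ e ∈ (w i).edges, e ∉ (w j).edges) :
    (2 * (m : ℚ) ^ 2 - m) / 4 + ((m : ℚ) - 1) ^ 2 * (∑ i, (mvec i : ℚ)) / 4 -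
        (∑ i ∈ Finset.univ.filter (fun i : Fin k => (i : ℕ) < t),
          ((mvec i : ℚ) - 1) * ((m : ℚ) - mvec i) ^ 2) / 4 -
        (∑ i ∈ Finset.univ.filter (fun i : Fin k => t ≤ (i : ℕ)),
          (mvec i : ℚ) * ((m : ℚ) - mvec i) ^ 2) / 4 ≤ szRevE G ∧
    (szRevE G =
        (2 * (m : ℚ) ^ 2 - m) / 4 + ((m : ℚ) - 1) ^ 2 * (∑ i, (mvec i : ℚ)) / 4 -
          (∑ i ∈ Finset.univ.filter (fun i : Fin k => (i : ℕ) < t),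
            ((mvec i : ℚ) - 1) * ((m : ℚ) - mvec i) ^ 2) / 4 -
          (∑ i ∈ Finset.univ.filter (fun i : Fin k => t ≤ (i : ℕ)),
            (mvec i : ℚ) * ((m : ℚ) - mvec i) ^ 2) / 4 ↔
      Nonempty (G ≃g bundleGraph k mvec (n + k - 1 - ∑ i, mvec i))) := by
  subst hn hm
  obtain rfl : mvec = fun i => (w i).length := funext fun i => (hlen i).symm
  rw [← EdgeSzeged.bundleSzeged_eq_of_parity hodd heven]
  exact stmt10_general G hG.1 w hcyc (fun i _ q => hG.2 (w i) q (hcyc i)) hdisj
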